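/- arXiv:1612.01754 — 9 statements merged into one kernel-verified Lean document; each statement's English description precedes it below -/
import Mathlib

section
/- Let n ≥ 2 be an integer and let r be a real number with r > 0. Then for every symmetric real n×n matrix h = (h_{ij}) one has (∑_{i=1}^n h_{ii})² ≤ ((n+r)/n)·∑_{i,j=1}^n h_{ij}² + ((n+r)(n²−n−r)/(rn))·∑_{i,j=1}^{n−1} h_{ij}². -/
/-- For `n ≥ 2`, `r > 0` and any symmetric real `n × n` matrix `h`,
`(∑ i, h i i)² ≤ ((n+r)/n) ∑_{i,j} h_{ij}² + ((n+r)(n²−n−r)/(rn)) ∑_{i,j ≤ n-1} h_{ij}²`. -/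
theorem casorati_quadratic_ineq (n : ℕ) (hn : 2 ≤ n) (r : ℝ) (hr : 0 < r)
    (h : Matrix (Fin n) (Fin n) ℝ) (hsym : h.IsSymm) :
    (∑ i, h i i) ^ 2 ≤
      ((n + r) / n) * ∑ i, ∑ j, (h i j) ^ 2
        + ((n + r) * (n ^ 2 - n - r) / (r * n)) *
            ∑ i : Fin (n - 1), ∑ j : Fin (n - 1),
              (h (Fin.castLE (by omega) i) (Fin.castLE (by omega) j)) ^ 2 := by
  obtain ⟨m, rfl⟩ : ∃ m, n = m + 1 := ⟨n - 1, by omega⟩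
  have hm : (1 : ℝ) ≤ m := by exact_mod_cast (by omega : 1 ≤ m)
  have hB : (∑ i : Fin (m + 1 - 1), ∑ j : Fin (m + 1 - 1),
      (h (Fin.castLE (by omega) i) (Fin.castLE (by omega) j)) ^ 2)
      = ∑ i : Fin m, ∑ j : Fin m, (h i.castSucc j.castSucc) ^ 2 := rfl
  rw [hB]
  have hA : (∑ i : Fin m, ∑ j : Fin m, (h i.castSucc j.castSucc) ^ 2)
      + (h (Fin.last m) (Fin.last m)) ^ 2 ≤ ∑ i, ∑ j, (h i j) ^ 2 := by
    rw [Fin.sum_univ_castSucc (n := m) (f := fun i => ∑ j, (h i j) ^ 2)]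
    apply add_le_add
    · apply Finset.sum_le_sum
      intro i _
      rw [Fin.sum_univ_castSucc]
      nlinarith [sq_nonneg (h i.castSucc (Fin.last m))]
    · rw [Fin.sum_univ_castSucc]
      have : 0 ≤ ∑ j : Fin m, (h (Fin.last m) j.castSucc) ^ 2 :=
        Finset.sum_nonneg fun _ _ => sq_nonneg _
      linarith
  have hD : (∑ i : Fin m, (h i.castSucc i.castSucc) ^ 2)
      ≤ ∑ i : Fin m, ∑ j : Fin m, (h i.castSucc j.castSucc) ^ 2 := by
    apply Finset.sum_le_sum
    intro i _
    exact Finset.single_le_sum (f := fun j : Fin m => (h i.castSucc j.castSucc) ^ 2)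
      (fun _ _ => sq_nonneg _) (Finset.mem_univ i)
  have hT : (∑ i : Fin m, h i.castSucc i.castSucc) ^ 2
      ≤ m * ∑ i : Fin m, (h i.castSucc i.castSucc) ^ 2 := by
    simpa using sq_sum_le_card_mul_sum_sq (s := (Finset.univ : Finset (Fin m)))
      (f := fun i => h i.castSucc i.castSucc)
  rw [Fin.sum_univ_castSucc (f := fun i => h i i)]
  generalize (∑ i : Fin m, ∑ j : Fin m, (h i.castSucc j.castSucc) ^ 2) = B at *
  generalize (∑ i, ∑ j, (h i j) ^ 2) = A at *
  generalize (∑ i : Fin m, (h i.castSucc i.castSucc) ^ 2) = D at *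
  generalize (∑ i : Fin m, h i.castSucc i.castSucc) = T at *
  generalize h (Fin.last m) (Fin.last m) = x at *
  push_cast
  generalize (m : ℝ) = k at *
  have hk : 0 < k + 1 := by linarith
  have h1 : T ^ 2 ≤ k * B := hT.trans (mul_le_mul_of_nonneg_left hD (by linarith))
  have hc : 0 ≤ (k + 1 + r) / (k + 1) := by positivity
  have h2 := mul_le_mul_of_nonneg_left hA hc
  have hd : 0 ≤ (k + 1 + r) / r := by positivity
  have h3 := mul_le_mul_of_nonneg_left h1 hd
  have h4 : (k + 1 + r) / r * T ^ 2 + (k + 1 + r) / (k + 1) * x ^ 2 - (T + x) ^ 2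
      = ((k + 1) * T - r * x) ^ 2 / (r * (k + 1)) := by
    field_simp
    ring
  have h5 : 0 ≤ ((k + 1) * T - r * x) ^ 2 / (r * (k + 1)) := by positivity
  have h6 : (k + 1 + r) / (k + 1) * (B + x ^ 2)
      + (k + 1 + r) * ((k + 1) ^ 2 - (k + 1) - r) / (r * (k + 1)) * B
      = (k + 1 + r) / r * (k * B) + (k + 1 + r) / (k + 1) * x ^ 2 := by
    field_simp
    ring
  linarith
end

section
/- Let n ≥ 2 be an integer and let r be a real number with r > 0. For a symmetric real n×n matrix h = (h_{ij}), equality (∑_{i=1}^n h_{ii})² = ((n+r)/n)·∑_{i,j=1}^n h_{ij}² + ((n+r)(n²−n−r)/(rn))·∑_{i,j=1}^{n−1} h_{ij}² holds if and only if there exists a real number a such that h_{ij} = 0 for all i ≠ j, h_{11} = h_{22} = ⋯ = h_{n−1,n−1} = a, and h_{nn} = (n(n−1)/r)·a. -/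
theorem cas_aux (m : ℕ) (hm : 1 ≤ m) (r : ℝ) (hr : 0 < r)
    (h : Matrix (Fin (m+1)) (Fin (m+1)) ℝ) (hsym : h.IsSymm) :
    (∑ i, h i i) ^ 2 =
      (((m + 1 : ℝ) + r) / (m + 1 : ℝ)) * ∑ i, ∑ j, (h i j) ^ 2
        + (((m + 1 : ℝ) + r) * ((m + 1 : ℝ) ^ 2 - (m + 1 : ℝ) - r) / (r * (m + 1 : ℝ))) *
            ∑ i : Fin m, ∑ j : Fin m, (h i.castSucc j.castSucc) ^ 2
    ↔ ∃ a : ℝ,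
        (∀ i j : Fin (m+1), i ≠ j → h i j = 0) ∧
        (∀ i : Fin m, h i.castSucc i.castSucc = a) ∧
        h (Fin.last m) (Fin.last m) = ((m + 1 : ℝ) * ((m + 1 : ℝ) - 1) / r) * a := by
  have hm' : (0 : ℝ) < m := by exact_mod_cast hm
  set T := ∑ i : Fin m, h i.castSucc i.castSucc with hT
  set x := h (Fin.last m) (Fin.last m) with hx
  set B := ∑ i : Fin m, (h i.castSucc (Fin.last m)) ^ 2 with hB
  set D := ∑ i : Fin m, (h i.castSucc i.castSucc) ^ 2 with hD
  set O := ∑ i : Fin m, ∑ j : Fin m, (if i = j then 0 else (h i.castSucc j.castSucc) ^ 2) with hO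
  set S := ∑ i : Fin m, ∑ j : Fin m, (h i.castSucc j.castSucc) ^ 2 with hS
  set V := ∑ i : Fin m, (h i.castSucc i.castSucc - T / m) ^ 2 with hV
  have hSO : S = O + D := by
    rw [hS, hO, hD, ← Finset.sum_add_distrib]
    refine Finset.sum_congr rfl fun i _ => ?_
    have : (h i.castSucc i.castSucc) ^ 2
        = ∑ j : Fin m, (if i = j then (h i.castSucc j.castSucc) ^ 2 else 0) := by simp
    rw [this, ← Finset.sum_add_distrib]
    refine Finset.sum_congr rfl fun j _ => ?_
    split_ifs <;> simp
  have hVD : V = D - T ^ 2 / m := by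
    have : V = D - 2 * (T / m) * T + m * (T / m) ^ 2 := by
      rw [hV, hD]
      nth_rewrite 3 [hT]
      rw [Finset.mul_sum, ← Finset.sum_sub_distrib]
      have : (m : ℝ) * (T / m) ^ 2 = ∑ i : Fin m, (T / m) ^ 2 := by simp
      rw [this, ← Finset.sum_add_distrib]
      refine Finset.sum_congr rfl fun j _ => ?_
      ring
    rw [this]
    field_simp
    ring
  have htr : ∑ i, h i i = T + x := Fin.sum_univ_castSucc _
  have htot : ∑ i, ∑ j, (h i j) ^ 2 = S + 2 * B + x ^ 2 := by
    rw [Fin.sum_univ_castSucc]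
    simp only [Fin.sum_univ_castSucc (n := m), Finset.sum_add_distrib]
    have : ∑ i : Fin m, (h (Fin.last m) i.castSucc) ^ 2 = B :=
      Finset.sum_congr rfl fun i _ => by rw [hsym.apply]
    rw [this]
    ring
  have hO0 : ∀ i ∈ Finset.univ, (0 : ℝ) ≤
      ∑ j : Fin m, (if i = j then 0 else (h i.castSucc j.castSucc) ^ 2) := fun i _ =>
    Finset.sum_nonneg fun j _ => by split_ifs <;> positivity
  have hOn : 0 ≤ O := Finset.sum_nonneg hO0
  have hVn : 0 ≤ V := by positivity
  have hBn : 0 ≤ B := by positivity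
  set n : ℝ := (m : ℝ) + 1 with hn
  have hnp : 0 < n := by positivity
  have key : (n + r) / n * (S + 2 * B + x ^ 2) + (n + r) * (n ^ 2 - n - r) / (r * n) * S
      - (T + x) ^ 2 = (n + r) * m / r * O + (n + r) * m / r * V + 2 * (n + r) / n * B
        + r / n * (n * T / r - x) ^ 2 := by
    rw [hVD, hSO]
    have : (m : ℝ) = n - 1 := by rw [hn]; ring
    have h1 : n - 1 ≠ 0 := by rw [← this]; exact hm'.ne'
    rw [this]
    field_simp
    ring
  have c1 : 0 < (n + r) * m / r := by positivity
  have c2 : 0 < 2 * (n + r) / n := by positivity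
  have c3 : 0 < r / n := by positivity
  rw [htr, htot]
  constructor
  · intro heq
    have e1 := mul_nonneg c1.le hOn
    have e2 := mul_nonneg c1.le hVn
    have e3 := mul_nonneg c2.le hBn
    have e4 := mul_nonneg c3.le (sq_nonneg (n * T / r - x))
    have zO : O = 0 := (mul_eq_zero.1 (by linarith : (n + r) * m / r * O = 0)).resolve_left c1.ne'
    have zV : V = 0 := (mul_eq_zero.1 (by linarith : (n + r) * m / r * V = 0)).resolve_left c1.ne'
    have zB : B = 0 := (mul_eq_zero.1 (by linarith : 2 * (n + r) / n * B = 0)).resolve_left c2.ne'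
    have zx := (mul_eq_zero.1
      (by linarith : r / n * (n * T / r - x) ^ 2 = 0)).resolve_left c3.ne'
    have zx' := pow_eq_zero_iff (two_ne_zero) |>.1 zx
    have bB : ∀ i : Fin m, h i.castSucc (Fin.last m) = 0 := fun i =>
      pow_eq_zero_iff (two_ne_zero) |>.1 <|
        (Finset.sum_eq_zero_iff_of_nonneg (fun i _ => sq_nonneg _)).1 zB i (Finset.mem_univ _)
    refine ⟨T / m, ?_, ?_, ?_⟩
    · intro i j hij
      induction i using Fin.lastCases with
      | last =>
        induction j using Fin.lastCases with
        | last => exact absurd rfl hij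
        | cast j => rw [hsym.apply]; exact bB j
      | cast i =>
        induction j using Fin.lastCases with
        | last => exact bB i
        | cast j =>
          have q1 := (Finset.sum_eq_zero_iff_of_nonneg hO0).1 zO i (Finset.mem_univ _)
          have q2 := (Finset.sum_eq_zero_iff_of_nonneg
            (fun j _ => by split_ifs <;> positivity)).1 q1 j (Finset.mem_univ _)
          have : i ≠ j := fun e => hij (by rw [e])
          rw [if_neg this] at q2
          exact pow_eq_zero_iff (two_ne_zero) |>.1 q2
    · intro i
      have := (Finset.sum_eq_zero_iff_of_nonneg (fun i _ => sq_nonneg _)).1 zV i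
        (Finset.mem_univ _)
      exact sub_eq_zero.1 (pow_eq_zero_iff (two_ne_zero) |>.1 this)
    · have : n - 1 = m := by rw [hn]; ring
      rw [this, ← sub_eq_zero.1 zx']
      field_simp
  · rintro ⟨a, h1, h2, h3⟩
    have zT : T = m * a := by simp [hT, h2]
    have zO : O = 0 := Finset.sum_eq_zero fun i _ => Finset.sum_eq_zero fun j _ => by
      split_ifs with hij
      · rfl
      · rw [h1 _ _ (fun e => hij (Fin.castSucc_injective _ e))]; simp
    have zB : B = 0 := Finset.sum_eq_zero fun i _ => by
      rw [h1 _ _ (Fin.castSucc_lt_last i).ne]; simp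
    have zV : V = 0 := Finset.sum_eq_zero fun i _ => by
      rw [h2, zT]; field_simp; simp
    have zx : n * T / r - x = 0 := by rw [h3, zT, hn]; ring
    rw [zO, zB, zV, zx] at key
    rw [zB]
    linarith

/-- For `n ≥ 2`, `r > 0` and a symmetric real `n × n` matrix `h`, equality
`(∑ i, h i i)² = ((n+r)/n) ∑_{i,j} h_{ij}² + ((n+r)(n²−n−r)/(rn)) ∑_{i,j ≤ n-1} h_{ij}²`
holds iff `h` is diagonal with `h_{11} = ⋯ = h_{n-1,n-1} = a` and `h_{nn} = (n(n-1)/r)·a`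
for some real `a`. -/
theorem casorati_quadratic_eq_iff (n : ℕ) (hn : 2 ≤ n) (r : ℝ) (hr : 0 < r)
    (h : Matrix (Fin n) (Fin n) ℝ) (hsym : h.IsSymm) :
    (∑ i, h i i) ^ 2 =
      ((n + r) / n) * ∑ i, ∑ j, (h i j) ^ 2
        + ((n + r) * (n ^ 2 - n - r) / (r * n)) *
            ∑ i : Fin (n - 1), ∑ j : Fin (n - 1),
              (h (Fin.castLE (by omega) i) (Fin.castLE (by omega) j)) ^ 2
    ↔ ∃ a : ℝ,
        (∀ i j : Fin n, i ≠ j → h i j = 0) ∧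
        (∀ i : Fin n, (i : ℕ) < n - 1 → h i i = a) ∧
        h ⟨n - 1, by omega⟩ ⟨n - 1, by omega⟩ = (n * (n - 1) / r) * a := by
  obtain ⟨m, rfl⟩ : ∃ m, n = m + 1 := ⟨n - 1, by omega⟩
  have := cas_aux m (by omega) r hr h hsym
  push_cast
  refine Iff.trans this ?_
  refine exists_congr fun a => and_congr Iff.rfl (and_congr ?_ Iff.rfl)
  constructor
  · intro H i hi
    exact H ⟨i, by omega⟩
  · intro H i
    exact H i.castSucc (by simp)
end

section
/- Let n ≥ 2 be an integer, r > 0 a real number, and let A be a self-adjoint linear endomorphism of the n-dimensional real Euclidean space ℝⁿ (with its standard inner product ⟨·,·⟩). Then for every linear subspace L ⊆ ℝⁿ of dimension n−1 and every orthonormal basis (f₁,…,f_{n−1}) of L, one has (tr A)² ≤ ((n+r)/n)·tr(A²) + ((n+r)(n²−n−r)/(rn))·∑_{i,j=1}^{n−1} ⟨A f_i, f_j⟩². -/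
open scoped RealInnerProductSpace

/-- For `n ≥ 2`, `r > 0`, a self-adjoint endomorphism `A` of `ℝⁿ`, any
hyperplane `L` (subspace of dimension `n-1`) and any orthonormal basis `f` of `L`,
`(tr A)² ≤ ((n+r)/n)·tr(A²) + ((n+r)(n²−n−r)/(rn))·∑_{i,j} ⟨A f_i, f_j⟩²`. -/
theorem casorati_hyperplane_ineq (n : ℕ) (hn : 2 ≤ n) (r : ℝ) (hr : 0 < r)
    (A : EuclideanSpace ℝ (Fin n) →ₗ[ℝ] EuclideanSpace ℝ (Fin n))
    (hA : ∀ x y : EuclideanSpace ℝ (Fin n), ⟪A x, y⟫ = ⟪x, A y⟫)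
    (L : Submodule ℝ (EuclideanSpace ℝ (Fin n)))
    (hL : Module.finrank ℝ L = n - 1)
    (f : OrthonormalBasis (Fin (n - 1)) ℝ L) :
    (LinearMap.trace ℝ _ A) ^ 2 ≤
      ((n + r) / n) * LinearMap.trace ℝ _ (A ∘ₗ A)
        + ((n + r) * (n ^ 2 - n - r) / (r * n)) *
            ∑ i : Fin (n - 1), ∑ j : Fin (n - 1),
              (⟪A (f i : EuclideanSpace ℝ (Fin n)), (f j : EuclideanSpace ℝ (Fin n))⟫) ^ 2 := by
  classical
  have hcard : Module.finrank ℝ (EuclideanSpace ℝ (Fin n)) = Fintype.card (Option (Fin (n - 1))) := by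
    simp; omega
  let v : Option (Fin (n - 1)) → EuclideanSpace ℝ (Fin n) := fun o => o.elim 0 (fun i => (f i : EuclideanSpace ℝ (Fin n)))
  have hv : Orthonormal ℝ ((Set.range (some : Fin (n - 1) → _)).domRestrict v) := by
    have hf : Orthonormal ℝ (fun i => (f i : EuclideanSpace ℝ (Fin n))) :=
      f.orthonormal.comp_linearIsometry L.subtypeₗᵢ
    rw [orthonormal_iff_ite] at hf ⊢
    rintro ⟨_, i, rfl⟩ ⟨_, j, rfl⟩
    simpa [v, Set.domRestrict, Subtype.ext_iff] using hf i j
  obtain ⟨b, hb⟩ := hv.exists_orthonormalBasis_extension_of_card_eq hcard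
  have hbf : ∀ i, b (some i) = (f i : EuclideanSpace ℝ (Fin n)) := fun i => hb _ ⟨i, rfl⟩
  have h1 : LinearMap.trace ℝ _ A = ∑ i, ⟪A (b i), b i⟫ := by
    rw [LinearMap.trace_eq_sum_inner A b]
    exact Finset.sum_congr rfl fun i _ => real_inner_comm _ _
  have h2 : LinearMap.trace ℝ _ (A ∘ₗ A) = ∑ i, ∑ j, ⟪A (b i), b j⟫ ^ 2 := by
    rw [LinearMap.trace_eq_sum_inner (A ∘ₗ A) b]
    refine Finset.sum_congr rfl fun i _ => ?_
    rw [LinearMap.comp_apply, ← hA, ← b.sum_inner_mul_inner]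
    refine Finset.sum_congr rfl fun j _ => ?_
    rw [real_inner_comm (A (b i)) (b j), sq]
  rw [h1, h2]
  simp only [Fintype.sum_option, hbf]
  rw [Finset.sum_add_distrib]
  set a := ⟪A (b none), b none⟫
  set T := ∑ i, ⟪A (f i : EuclideanSpace ℝ (Fin n)), (f i : EuclideanSpace ℝ (Fin n))⟫ with hT
  set S := ∑ i, ∑ j, ⟪A (f i : EuclideanSpace ℝ (Fin n)), (f j : EuclideanSpace ℝ (Fin n))⟫ ^ 2 with hS
  set p := ∑ j, ⟪A (b none), (f j : EuclideanSpace ℝ (Fin n))⟫ ^ 2 with hp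
  set q := ∑ i, ⟪A (f i : EuclideanSpace ℝ (Fin n)), b none⟫ ^ 2 with hq
  have hp0 : 0 ≤ p := Finset.sum_nonneg fun _ _ => sq_nonneg _
  have hq0 : 0 ≤ q := Finset.sum_nonneg fun _ _ => sq_nonneg _
  have hn0 : (0 : ℝ) < n := by exact_mod_cast (by omega : 0 < n)
  have hTS : T ^ 2 ≤ ((n : ℝ) - 1) * S := by
    have h := sq_sum_le_card_mul_sum_sq (s := Finset.univ)
      (f := fun i => ⟪A (f i : EuclideanSpace ℝ (Fin n)), (f i : EuclideanSpace ℝ (Fin n))⟫)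
    have hc : ((n - 1 : ℕ) : ℝ) = (n : ℝ) - 1 := by
      rw [Nat.cast_sub (by omega)]; simp
    rw [Finset.card_univ, Fintype.card_fin, hc] at h
    refine h.trans (mul_le_mul_of_nonneg_left ?_ ?_)
    · refine Finset.sum_le_sum fun i _ => ?_
      exact Finset.single_le_sum (f := fun j => ⟪A (f i : EuclideanSpace ℝ (Fin n)), (f j : EuclideanSpace ℝ (Fin n))⟫ ^ 2)
        (fun _ _ => sq_nonneg _) (Finset.mem_univ i)
    · rw [← hc]; positivity
  have key : (n + r) / n * (a ^ 2 + p + (q + S)) + (n + r) * (n ^ 2 - n - r) / (r * n) * S - (a + T) ^ 2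
      = (n + r) / n * (p + q) + (n + r) / r * (((n : ℝ) - 1) * S - T ^ 2)
        + (r * a - n * T) ^ 2 / (r * n) := by
    field_simp
    ring
  have e1 : 0 ≤ (n + r) / n * (p + q) := by positivity
  have e2 : 0 ≤ (n + r) / r * (((n : ℝ) - 1) * S - T ^ 2) :=
    mul_nonneg (by positivity) (by linarith)
  have e3 : 0 ≤ (r * a - n * T) ^ 2 / (r * n) := by positivity
  linarith
end

section
/- Let n ≥ 2 be an integer, r a real number with 0 < r < n(n−1), and A a self-adjoint linear endomorphism of the n-dimensional real Euclidean space ℝⁿ. Define C := (1/n)·tr(A²), and for each (n−1)-dimensional subspace L of ℝⁿ define C(L) := (1/(n−1))·tr((P_L ∘ A ∘ P_L)²), where P_L is the orthogonal projection of ℝⁿ onto L. Then (tr A)² ≤ (n+r)·C + ((n−1)(n+r)(n²−n−r)/(rn))·inf{ C(L) : L an (n−1)-dimensional subspace of ℝⁿ }. -/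
theorem trace_mul_self_nonneg_aux {n : ℕ} (X : Module.End ℝ (EuclideanSpace ℝ (Fin n)))
    (hX : ∀ x y, inner ℝ (X x) y = (inner ℝ x (X y) : ℝ)) : 0 ≤ LinearMap.trace ℝ _ (X * X) := by
  rw [LinearMap.trace_eq_sum_inner (X * X) (EuclideanSpace.basisFun (Fin n) ℝ)]
  refine Finset.sum_nonneg fun i _ => ?_
  rw [Module.End.mul_apply, ← hX]
  exact real_inner_self_nonneg

/-- Cauchy-Schwarz for the trace, on the range of a projection. -/
theorem trace_sq_le_aux {n : ℕ} (A P : Module.End ℝ (EuclideanSpace ℝ (Fin n))) (d : ℝ) (hd : 0 < d)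
    (hA : ∀ x y, inner ℝ (A x) y = (inner ℝ x (A y) : ℝ))
    (hP : ∀ x y, inner ℝ (P x) y = (inner ℝ x (P y) : ℝ)) (hPP : P * P = P)
    (ht : LinearMap.trace ℝ _ P = d) :
    (LinearMap.trace ℝ _ (P * A * P)) ^ 2 ≤ d * LinearMap.trace ℝ _ (P * A * P * (P * A * P)) := by
  set X := P * A * P with hX
  have h1 : P * X = X := by rw [hX, ← mul_assoc, ← mul_assoc, hPP]
  have h2 : X * P = X := by rw [hX, mul_assoc, hPP]
  set s := LinearMap.trace ℝ _ X with hs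
  have h := trace_mul_self_nonneg_aux (d • X - s • P) (by
    intro x y
    simp only [LinearMap.sub_apply, LinearMap.smul_apply, inner_sub_left, inner_sub_right,
      real_inner_smul_left, real_inner_smul_right, hX, Module.End.mul_apply, hA, hP])
  have e : (d • X - s • P) * (d • X - s • P) = (d * d) • (X * X) - (2 * d * s) • X + (s * s) • P := by
    simp only [sub_mul, mul_sub, smul_mul_smul_comm, h1, h2, hPP]
    module
  rw [e] at h
  simp only [map_add, map_sub, map_smul, smul_eq_mul, ht, ← hs] at h
  have : 0 ≤ d * (d * LinearMap.trace ℝ _ (X * X) - s ^ 2) := by linarith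
  have := nonneg_of_mul_nonneg_right this hd
  linarith

theorem casorati_aux (n : ℕ) (hn : 2 ≤ n) (r : ℝ) (hr : 0 < r)
    (A P : Module.End ℝ (EuclideanSpace ℝ (Fin n)))
    (hA : ∀ x y, inner ℝ (A x) y = (inner ℝ x (A y) : ℝ))
    (hP : ∀ x y, inner ℝ (P x) y = (inner ℝ x (P y) : ℝ)) (hPP : P * P = P)
    (ht : LinearMap.trace ℝ _ P = n - 1) :
    (LinearMap.trace ℝ _ A) ^ 2 ≤
      (n + r) * ((1 / n) * LinearMap.trace ℝ _ (A * A))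
        + ((n - 1) * (n + r) * (n ^ 2 - n - r) / (r * n)) *
          ((1 / (n - 1 : ℝ)) * LinearMap.trace ℝ _ (P * A * P * (P * A * P))) := by
  have hn' : (2 : ℝ) ≤ n := by exact_mod_cast hn
  obtain ⟨Q, hQ⟩ : ∃ Q, Q = 1 - P := ⟨_, rfl⟩
  have hQQ : Q * Q = Q := by rw [hQ]; simp only [sub_mul, mul_sub, hPP]; simp
  have hQs : ∀ x y, inner ℝ (Q x) y = (inner ℝ x (Q y) : ℝ) := by
    intro x y
    simp [hQ, inner_sub_left, inner_sub_right, hP]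
  have hQt : LinearMap.trace ℝ _ Q = 1 := by
    rw [hQ, map_sub, ht, LinearMap.trace_one]; simp
  have c1 := trace_sq_le_aux A P (n - 1) (by linarith) hA hP hPP ht
  have c2 := trace_sq_le_aux A Q 1 one_pos hA hQs hQQ hQt
  have tX : ∀ R : Module.End ℝ (EuclideanSpace ℝ (Fin n)), R * R = R →
      LinearMap.trace ℝ _ (R * A * R) = LinearMap.trace ℝ _ (R * A) := by
    intro R hR
    rw [LinearMap.trace_mul_comm, ← mul_assoc, hR]
  have tXX : ∀ R : Module.End ℝ (EuclideanSpace ℝ (Fin n)), R * R = R →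
      LinearMap.trace ℝ _ (R * A * R * (R * A * R)) = LinearMap.trace ℝ _ (A * (R * A * R)) := by
    intro R hR
    have : R * A * R * (R * A * R) = R * (A * (R * R) * A * R) := by noncomm_ring
    rw [this, LinearMap.trace_mul_comm, hR]
    have : A * R * A * R * R = A * (R * A * (R * R)) := by noncomm_ring
    rw [this, hR]
  have hsum : LinearMap.trace ℝ _ A
      = LinearMap.trace ℝ _ (P * A * P) + LinearMap.trace ℝ _ (Q * A * Q) := by
    rw [tX P hPP, tX Q hQQ, ← map_add, ← add_mul, hQ]; simp
  have hPQ : P * Q = 0 := by rw [hQ, mul_sub, hPP]; simp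
  have hQP : Q * P = 0 := by rw [hQ, sub_mul, hPP]; simp
  have hsq : LinearMap.trace ℝ _ (P * A * P * (P * A * P))
      + LinearMap.trace ℝ _ (Q * A * Q * (Q * A * Q)) ≤ LinearMap.trace ℝ _ (A * A) := by
    have h := trace_mul_self_nonneg_aux (A - P * A * P - Q * A * Q) (by
      intro x y
      simp only [LinearMap.sub_apply, inner_sub_left, inner_sub_right,
        Module.End.mul_apply, hA, hP, hQs])
    have z1 : P * A * P * (Q * A * Q) = 0 := by
      have : P * A * P * (Q * A * Q) = P * A * (P * Q) * A * Q := by noncomm_ring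
      rw [this, hPQ]; simp
    have z2 : Q * A * Q * (P * A * P) = 0 := by
      have : Q * A * Q * (P * A * P) = Q * A * (Q * P) * A * P := by noncomm_ring
      rw [this, hQP]; simp
    have e1 := tXX P hPP
    have e2 := tXX Q hQQ
    simp only [sub_mul _ _ (_ : Module.End ℝ (EuclideanSpace ℝ (Fin n))), mul_sub, z1, z2, map_sub, map_zero] at h
    rw [LinearMap.trace_mul_comm ℝ (P * A * P) A, LinearMap.trace_mul_comm ℝ (Q * A * Q) A] at h
    linarith
  rw [hsum]
  generalize LinearMap.trace ℝ _ (P * A * P * (P * A * P)) = T at *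
  generalize LinearMap.trace ℝ _ (Q * A * Q * (Q * A * Q)) = U at *
  generalize LinearMap.trace ℝ _ (A * A) = V at *
  generalize LinearMap.trace ℝ _ (P * A * P) = S at *
  generalize LinearMap.trace ℝ _ (Q * A * Q) = t at *
  generalize (n : ℝ) = N at *
  have hN : 0 < N := by linarith
  have hN1 : N - 1 ≠ 0 := by linarith
  have k1 : (N + r) * ((1 / N) * (T + t ^ 2)) ≤ (N + r) * ((1 / N) * V) := by
    gcongr; linarith
  have k2 : (N + r) / r * S ^ 2 ≤ (N + r) / r * ((N - 1) * T) := by gcongr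
  have k3 : (N + r) * ((1 / N) * (T + t ^ 2)) + ((N - 1) * (N + r) * (N ^ 2 - N - r) / (r * N)) *
          ((1 / (N - 1 : ℝ)) * T) = (N + r) / r * ((N - 1) * T) + (N + r) / N * t ^ 2 := by
    field_simp
    ring
  have k4 : (N + r) / r * S ^ 2 + (N + r) / N * t ^ 2 - (S + t) ^ 2 = (N * S - r * t) ^ 2 / (r * N) := by
    field_simp
    ring
  have k5 : 0 ≤ (N * S - r * t) ^ 2 / (r * N) := by positivity
  linarith


/-- For `n ≥ 2`, `0 < r < n(n-1)` and a self-adjoint endomorphism `A` of `ℝⁿ`,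
with `C := (1/n)·tr(A²)` and `C(L) := (1/(n-1))·tr((P_L ∘ A ∘ P_L)²)` for each
`(n-1)`-dimensional subspace `L` (where `P_L` is the orthogonal projection onto `L`),
`(tr A)² ≤ (n+r)·C + ((n-1)(n+r)(n²−n−r)/(rn))·inf { C(L) }`. -/
theorem casorati_delta_ineq (n : ℕ) (hn : 2 ≤ n) (r : ℝ) (hr : 0 < r)
    (hr' : r < n * (n - 1))
    (A : EuclideanSpace ℝ (Fin n) →ₗ[ℝ] EuclideanSpace ℝ (Fin n))
    (hA : ∀ x y : EuclideanSpace ℝ (Fin n),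
      inner ℝ (A x) y = (inner ℝ x (A y) : ℝ)) :
    (LinearMap.trace ℝ _ A) ^ 2 ≤
      (n + r) * ((1 / n) * LinearMap.trace ℝ _ (A ∘ₗ A))
        + ((n - 1) * (n + r) * (n ^ 2 - n - r) / (r * n)) *
            sInf { c : ℝ | ∃ L : Submodule ℝ (EuclideanSpace ℝ (Fin n)),
              Module.finrank ℝ L = n - 1 ∧
              c = (1 / (n - 1 : ℝ)) *
                LinearMap.trace ℝ _
                  (((L.subtypeL.comp (Submodule.orthogonalProjectionOnto L)).toLinearMap ∘ₗ A ∘ₗ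
                      (L.subtypeL.comp (Submodule.orthogonalProjectionOnto L)).toLinearMap) ∘ₗ
                   ((L.subtypeL.comp (Submodule.orthogonalProjectionOnto L)).toLinearMap ∘ₗ A ∘ₗ
                      (L.subtypeL.comp (Submodule.orthogonalProjectionOnto L)).toLinearMap)) } := by
  have hn' : (2 : ℝ) ≤ n := by exact_mod_cast hn
  have hK : 0 < ((n : ℝ) - 1) * (n + r) * (n ^ 2 - n - r) / (r * n) := by
    have h1 : 0 < (n : ℝ) - 1 := by linarith
    have h2 : 0 < (n : ℝ) ^ 2 - n - r := by nlinarith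
    positivity
  rw [← sub_le_iff_le_add', ← div_le_iff₀' hK]
  apply le_csInf
  · have hv : EuclideanSpace.single (⟨0, by omega⟩ : Fin n) (1 : ℝ) ≠ 0 := by simp
    have h1 := finrank_span_singleton (K := ℝ) hv
    have h2 := Submodule.finrank_add_finrank_orthogonal
      (ℝ ∙ (EuclideanSpace.single (⟨0, by omega⟩ : Fin n) (1 : ℝ)))
    rw [finrank_euclideanSpace_fin, h1] at h2
    exact ⟨_, (ℝ ∙ (EuclideanSpace.single (⟨0, by omega⟩ : Fin n) (1 : ℝ)))ᗮ, by omega, rfl⟩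
  · rintro c ⟨L, hL, rfl⟩
    rw [div_le_iff₀' hK, sub_le_iff_le_add']
    have hproj : LinearMap.IsProj L
        (L.subtypeL.comp (Submodule.orthogonalProjectionOnto L)).toLinearMap :=
      ⟨fun x => by simp, fun x hx => by
        simpa using Submodule.starProjection_eq_self_iff.mpr hx⟩
    have := casorati_aux n hn r hr A
      (L.subtypeL.comp (Submodule.orthogonalProjectionOnto L)).toLinearMap hA
      (fun x y => Submodule.inner_starProjection_left_eq_right L x y)
      (by
        ext1 x
        exact hproj.map_id _ (hproj.map_mem x))
      (by
        rw [hproj.trace, hL, Nat.cast_sub (by omega)]; simp)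
    exact this
end

section
/- Let n ≥ 2 be an integer, r a real number with r > n(n−1), and A a self-adjoint linear endomorphism of the n-dimensional real Euclidean space ℝⁿ. Define C := (1/n)·tr(A²), and for each (n−1)-dimensional subspace L of ℝⁿ define C(L) := (1/(n−1))·tr((P_L ∘ A ∘ P_L)²), where P_L is the orthogonal projection of ℝⁿ onto L. Then (tr A)² ≤ (n+r)·C − ((n−1)(n+r)(r−n²+n)/(rn))·sup{ C(L) : L an (n−1)-dimensional subspace of ℝⁿ }. -/
open Module in
theorem casorati_trace_sq {n : ℕ} (F : EuclideanSpace ℝ (Fin n) →ₗ[ℝ] EuclideanSpace ℝ (Fin n))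
    (hF : ∀ x y : EuclideanSpace ℝ (Fin n), inner ℝ (F x) y = (inner ℝ x (F y) : ℝ))
    (b : OrthonormalBasis (Fin n) ℝ (EuclideanSpace ℝ (Fin n))) :
    LinearMap.trace ℝ _ (F ∘ₗ F) = ∑ i, ∑ j, (inner ℝ (b j) (F (b i)) : ℝ) ^ 2 := by
  rw [LinearMap.trace_eq_sum_inner _ b]
  refine Finset.sum_congr rfl fun i _ => ?_
  rw [LinearMap.comp_apply, ← hF, ← b.sum_inner_mul_inner]
  refine Finset.sum_congr rfl fun j _ => ?_
  rw [real_inner_comm (b j) (F (b i))]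
  ring

open Module in
theorem casorati_basis {n : ℕ} (hn : 2 ≤ n) (L : Submodule ℝ (EuclideanSpace ℝ (Fin n)))
    (hL : finrank ℝ L = n - 1) :
    ∃ (b : OrthonormalBasis (Fin n) ℝ (EuclideanSpace ℝ (Fin n))) (k : Fin n),
      L.starProjection (b k) = 0 ∧ ∀ i, i ≠ k → L.starProjection (b i) = b i := by
  have h1 : finrank ℝ Lᗮ = 1 := by
    have := L.finrank_add_finrank_orthogonal
    rw [finrank_euclideanSpace_fin] at this
    omega
  have : Nontrivial Lᗮ := Module.nontrivial_of_finrank_pos (R := ℝ) (by omega)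
  obtain ⟨w, hw⟩ := exists_ne (0 : Lᗮ)
  have hw0 : (w : EuclideanSpace ℝ (Fin n)) ≠ 0 := fun h => hw (Submodule.coe_eq_zero.mp h)
  set u : EuclideanSpace ℝ (Fin n) := (‖(w : EuclideanSpace ℝ (Fin n))‖⁻¹ : ℝ) • w with hu
  have hun : ‖u‖ = 1 := norm_smul_inv_norm (𝕜 := ℝ) hw0
  have huL : u ∈ Lᗮ := Lᗮ.smul_mem _ w.2
  have hu0 : u ≠ 0 := by intro h; rw [h] at hun; simp at hun
  let k : Fin n := ⟨0, by omega⟩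
  have ho : Orthonormal ℝ (({k} : Set (Fin n)).domRestrict (fun _ => u)) := by
    refine ⟨fun i => hun, fun i j hij => ?_⟩
    exact absurd (Subsingleton.elim i j) hij
  obtain ⟨b, hb⟩ := ho.exists_orthonormalBasis_extension_of_card_eq (by simp)
  have hbk : b k = u := hb k rfl
  refine ⟨b, k, ?_, fun i hi => ?_⟩
  · rw [hbk]
    exact L.starProjection_apply_eq_zero_iff.mpr huL
  · rw [Submodule.starProjection_eq_self_iff]
    have hs : (ℝ ∙ u) = Lᗮ := by
      apply Submodule.eq_of_le_of_finrank_eq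
      · rwa [Submodule.span_singleton_le_iff_mem]
      · rw [finrank_span_singleton hu0, h1]
    rw [← L.orthogonal_orthogonal, ← hs, Submodule.mem_orthogonal_singleton_iff_inner_left, ← hbk]
    exact b.orthonormal.2 hi

theorem casorati_key (n : ℕ) (hn : 2 ≤ n) (r : ℝ)
    (hr : (n : ℝ) * (n - 1) < r)
    (A : EuclideanSpace ℝ (Fin n) →ₗ[ℝ] EuclideanSpace ℝ (Fin n))
    (hA : ∀ x y : EuclideanSpace ℝ (Fin n),
      inner ℝ (A x) y = (inner ℝ x (A y) : ℝ))
    (L : Submodule ℝ (EuclideanSpace ℝ (Fin n))) (hL : Module.finrank ℝ L = n - 1) :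
    n * r * (LinearMap.trace ℝ _ A) ^ 2 ≤
      (n + r) * (r * LinearMap.trace ℝ _ (A ∘ₗ A)
        - (r - n ^ 2 + n) * LinearMap.trace ℝ _
          ((L.starProjection.toLinearMap ∘ₗ A ∘ₗ L.starProjection.toLinearMap) ∘ₗ
            (L.starProjection.toLinearMap ∘ₗ A ∘ₗ L.starProjection.toLinearMap))) := by
  obtain ⟨b, k, hk, hik⟩ := casorati_basis hn L hL
  have hPA : ∀ x y : EuclideanSpace ℝ (Fin n),
      inner ℝ ((L.starProjection.toLinearMap ∘ₗ A ∘ₗ L.starProjection.toLinearMap) x) y =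
      (inner ℝ x ((L.starProjection.toLinearMap ∘ₗ A ∘ₗ L.starProjection.toLinearMap) y) : ℝ) := by
    intro x y
    simp only [LinearMap.comp_apply, ContinuousLinearMap.coe_coe]
    rw [L.inner_starProjection_left_eq_right, hA, L.inner_starProjection_left_eq_right]
  rw [casorati_trace_sq A hA b, casorati_trace_sq _ hPA b, LinearMap.trace_eq_sum_inner A b]
  set a : Fin n → Fin n → ℝ := fun i j => inner ℝ (b j) (A (b i)) with ha
  have hT : ∀ i j, (inner ℝ (b j)
      ((L.starProjection.toLinearMap ∘ₗ A ∘ₗ L.starProjection.toLinearMap) (b i)) : ℝ) =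
      if i = k ∨ j = k then 0 else a i j := by
    intro i j
    simp only [LinearMap.comp_apply, ContinuousLinearMap.coe_coe]
    rw [← L.inner_starProjection_left_eq_right]
    by_cases hi : i = k
    · simp [hi, hk]
    by_cases hj : j = k
    · simp [hj, hk]
    simp [hi, hj, hik i hi, hik j hj, ha]
  simp only [hT]
  change n * r * (∑ i, a i i) ^ 2 ≤ (n + r) * (r * (∑ i, ∑ j, a i j ^ 2) - _)
  have e1 : ∑ i, a i i = a k k + ∑ i ∈ Finset.univ.erase k, a i i :=
    (Finset.add_sum_erase _ _ (Finset.mem_univ k)).symm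
  have e2 : ∑ i, ∑ j, (if i = k ∨ j = k then 0 else a i j) ^ 2 + a k k ^ 2
      ≤ ∑ i, ∑ j, a i j ^ 2 := by
    have : a k k ^ 2 = ∑ i, ∑ j, if i = k ∧ j = k then a i j ^ 2 else 0 := by
      simp [ite_and]
    rw [this, ← Finset.sum_add_distrib]
    refine Finset.sum_le_sum fun i _ => ?_
    rw [← Finset.sum_add_distrib]
    refine Finset.sum_le_sum fun j _ => ?_
    have := sq_nonneg (a i j)
    by_cases hi : i = k <;> by_cases hj : j = k <;> simp [hi, hj, sq_nonneg]
  have e3 : ∑ i ∈ Finset.univ.erase k, a i i ^ 2 ≤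
      ∑ i, ∑ j, (if i = k ∨ j = k then 0 else a i j) ^ 2 := by
    calc _ ≤ ∑ i ∈ Finset.univ.erase k, ∑ j, (if i = k ∨ j = k then 0 else a i j) ^ 2 := by
          refine Finset.sum_le_sum fun i hi => ?_
          have hi' := Finset.ne_of_mem_erase hi
          calc _ = (if i = k ∨ i = k then 0 else a i i) ^ 2 := by simp [hi']
            _ ≤ _ := Finset.single_le_sum
              (f := fun j => (if i = k ∨ j = k then 0 else a i j) ^ 2)
              (fun j _ => sq_nonneg _) (Finset.mem_univ i)
      _ ≤ _ := Finset.sum_le_sum_of_subset_of_nonneg (Finset.subset_univ _)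
          (fun i _ _ => Finset.sum_nonneg fun j _ => sq_nonneg _)
  have e4 : (∑ i ∈ Finset.univ.erase k, a i i) ^ 2 ≤
      ((n : ℝ) - 1) * ∑ i ∈ Finset.univ.erase k, a i i ^ 2 := by
    have := sq_sum_le_card_mul_sum_sq (s := Finset.univ.erase k) (f := fun i => a i i)
    rw [Finset.card_erase_of_mem (Finset.mem_univ k), Finset.card_univ, Fintype.card_fin,
      Nat.cast_sub (by omega)] at this
    simpa using this
  rw [e1]
  generalize ∑ i, ∑ j, (if i = k ∨ j = k then 0 else a i j) ^ 2 = T at *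
  generalize ∑ i, ∑ j, a i j ^ 2 = S at *
  generalize ∑ i ∈ Finset.univ.erase k, a i i = s at *
  generalize a k k = t at *
  have hn' : (2 : ℝ) ≤ n := by exact_mod_cast hn
  have hr0 : 0 < r := by nlinarith
  have f1 : s ^ 2 ≤ ((n : ℝ) - 1) * T := e4.trans (mul_le_mul_of_nonneg_left e3 (by linarith))
  have f2 : r * t ^ 2 + n * s ^ 2 ≤ r * S - (r - n ^ 2 + n) * T := by
    nlinarith [mul_le_mul_of_nonneg_left e2 hr0.le,
      mul_le_mul_of_nonneg_left f1 (show (0 : ℝ) ≤ n by linarith)]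
  have f3 := mul_le_mul_of_nonneg_left f2 (show (0 : ℝ) ≤ n + r by linarith)
  nlinarith [sq_nonneg (n * s - r * t)]


/-- For `n ≥ 2`, `r > n(n-1)` and a self-adjoint endomorphism `A` of `ℝⁿ`,
with `C := (1/n)·tr(A²)` and `C(L) := (1/(n-1))·tr((P_L ∘ A ∘ P_L)²)` for each
`(n-1)`-dimensional subspace `L` (where `P_L` is the orthogonal projection onto `L`),
`(tr A)² ≤ (n+r)·C − ((n-1)(n+r)(r−n²+n)/(rn))·sup { C(L) }`. -/
theorem casorati_deltahat_ineq (n : ℕ) (hn : 2 ≤ n) (r : ℝ)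
    (hr : (n : ℝ) * (n - 1) < r)
    (A : EuclideanSpace ℝ (Fin n) →ₗ[ℝ] EuclideanSpace ℝ (Fin n))
    (hA : ∀ x y : EuclideanSpace ℝ (Fin n),
      inner ℝ (A x) y = (inner ℝ x (A y) : ℝ)) :
    (LinearMap.trace ℝ _ A) ^ 2 ≤
      (n + r) * ((1 / n) * LinearMap.trace ℝ _ (A ∘ₗ A))
        - ((n - 1) * (n + r) * (r - n ^ 2 + n) / (r * n)) *
            sSup { c : ℝ | ∃ L : Submodule ℝ (EuclideanSpace ℝ (Fin n)),
              Module.finrank ℝ L = n - 1 ∧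
              c = (1 / (n - 1 : ℝ)) *
                LinearMap.trace ℝ _
                  (((L.subtypeL.comp (Submodule.orthogonalProjectionOnto L)).toLinearMap ∘ₗ A ∘ₗ
                      (L.subtypeL.comp (Submodule.orthogonalProjectionOnto L)).toLinearMap) ∘ₗ
                   ((L.subtypeL.comp (Submodule.orthogonalProjectionOnto L)).toLinearMap ∘ₗ A ∘ₗ
                      (L.subtypeL.comp (Submodule.orthogonalProjectionOnto L)).toLinearMap)) } := by
  have hn' : (2 : ℝ) ≤ n := by exact_mod_cast hn
  have hr0 : 0 < r := by nlinarith
  have hq : 0 < r - (n : ℝ) ^ 2 + n := by nlinarith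
  have hn1 : (0 : ℝ) < n - 1 := by linarith
  have hn0 : (0 : ℝ) < n := by linarith
  have hc : 0 < ((n : ℝ) - 1) * (n + r) * (r - n ^ 2 + n) / (r * n) := by positivity
  rw [le_sub_comm, ← le_div_iff₀' hc]
  apply csSup_le
  · have hf : Fact (Module.finrank ℝ (EuclideanSpace ℝ (Fin n)) = (n - 1) + 1) :=
      ⟨by rw [finrank_euclideanSpace_fin]; omega⟩
    have : Nontrivial (EuclideanSpace ℝ (Fin n)) :=
      Module.nontrivial_of_finrank_pos (R := ℝ) (by rw [finrank_euclideanSpace_fin]; omega)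
    obtain ⟨v, hv⟩ := exists_ne (0 : EuclideanSpace ℝ (Fin n))
    exact ⟨_, (Submodule.span ℝ {v})ᗮ, Submodule.finrank_orthogonal_span_singleton hv, rfl⟩
  · rintro c ⟨L, hL, rfl⟩
    have key := casorati_key n hn r hr A hA L hL
    rw [le_div_iff₀' hc]
    change n * r * (LinearMap.trace ℝ _ A) ^ 2 ≤
      (n + r) * (r * LinearMap.trace ℝ _ (A ∘ₗ A)
        - (r - n ^ 2 + n) * LinearMap.trace ℝ _
          (((L.subtypeL.comp (Submodule.orthogonalProjectionOnto L)).toLinearMap ∘ₗ A ∘ₗ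
                      (L.subtypeL.comp (Submodule.orthogonalProjectionOnto L)).toLinearMap) ∘ₗ
                   ((L.subtypeL.comp (Submodule.orthogonalProjectionOnto L)).toLinearMap ∘ₗ A ∘ₗ
                      (L.subtypeL.comp (Submodule.orthogonalProjectionOnto L)).toLinearMap))) at key
    generalize LinearMap.trace ℝ _
      (((L.subtypeL.comp (Submodule.orthogonalProjectionOnto L)).toLinearMap ∘ₗ A ∘ₗ
                      (L.subtypeL.comp (Submodule.orthogonalProjectionOnto L)).toLinearMap) ∘ₗ
                   ((L.subtypeL.comp (Submodule.orthogonalProjectionOnto L)).toLinearMap ∘ₗ A ∘ₗ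
                      (L.subtypeL.comp (Submodule.orthogonalProjectionOnto L)).toLinearMap)) = T at *
    generalize LinearMap.trace ℝ _ (A ∘ₗ A) = S at *
    generalize LinearMap.trace ℝ _ A = t at *
    have hnr : 0 < (n : ℝ) * r := by positivity
    rw [le_sub_comm]
    refine le_of_mul_le_mul_left (key.trans (le_of_eq ?_)) hnr
    field_simp
end

section
/- Let n ≥ 2 be an integer. For every symmetric real n×n matrix h = (h_{ij}) one has (∑_{i=1}^n h_{ii})² ≤ ((n+1)/2)·(∑_{i,j=1}^n h_{ij}² + ∑_{i,j=1}^{n−1} h_{ij}²), and equality holds if and only if there exists a real number a such that h_{ij} = 0 for all i ≠ j, h_{11} = ⋯ = h_{n−1,n−1} = a, and h_{nn} = 2a. -/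
theorem cas_diag_expand {k : ℕ} (g : Fin k → Fin k → ℝ) (c : Fin k → ℝ) :
    ∑ i, ∑ j, (g i j - if i = j then c i else 0) ^ 2
      = ∑ i, ∑ j, (g i j) ^ 2 - 2 * ∑ i, c i * g i i + ∑ i, (c i) ^ 2 := by
  rw [Finset.mul_sum, ← Finset.sum_sub_distrib, ← Finset.sum_add_distrib]
  refine Finset.sum_congr rfl fun i _ => ?_
  have e : ∀ j, (g i j - if i = j then c i else 0) ^ 2
      = (g i j) ^ 2 + if i = j then (-2 * (c i * g i j) + (c i) ^ 2) else 0 := by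
    intro j
    split_ifs <;> ring
  simp only [e, Finset.sum_add_distrib, Finset.sum_ite_eq, Finset.mem_univ, if_true]
  ring

theorem cas_core (m : ℕ) (h : Fin (m + 1) → Fin (m + 1) → ℝ) :
    (∑ i, h i i) ^ 2 ≤ (((m + 1 : ℕ) + 1) / 2 : ℝ) * (∑ i, ∑ j, (h i j) ^ 2
          + ∑ i : Fin m, ∑ j : Fin m, (h i.castSucc j.castSucc) ^ 2)
    ∧ ((∑ i, h i i) ^ 2 = (((m + 1 : ℕ) + 1) / 2 : ℝ) * (∑ i, ∑ j, (h i j) ^ 2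
          + ∑ i : Fin m, ∑ j : Fin m, (h i.castSucc j.castSucc) ^ 2)
      ↔ ∃ a : ℝ, (∀ i j, i ≠ j → h i j = 0) ∧
          (∀ i : Fin (m + 1), (i : ℕ) < m → h i i = a) ∧
          h (Fin.last m) (Fin.last m) = 2 * a) := by
  have hm : (0 : ℝ) < (m : ℝ) + 2 := by positivity
  obtain ⟨a, ha⟩ : ∃ a : ℝ, ∑ i, h i i = ((m : ℝ) + 2) * a :=
    ⟨(∑ i, h i i) / ((m : ℝ) + 2), by field_simp⟩
  let c : Fin (m + 1) → ℝ := fun i => if (i : ℕ) < m then a else 2 * a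
  have hc1 : ∀ i : Fin m, c i.castSucc = a := fun i => by simp [c]
  have hc2 : c (Fin.last m) = 2 * a := by simp [c]
  have e1 := cas_diag_expand h c
  have e2 := cas_diag_expand (fun i j : Fin m => h i.castSucc j.castSucc) (fun _ => a)
  have hT := ha
  rw [Fin.sum_univ_castSucc] at hT
  rw [Fin.sum_univ_castSucc (fun i => c i * h i i), Fin.sum_univ_castSucc (fun i => c i ^ 2)] at e1
  simp only [hc1, hc2, ← Finset.mul_sum, Finset.sum_const, Finset.card_univ, Fintype.card_fin,
    nsmul_eq_mul] at e1 e2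
  have p1 : 0 ≤ ∑ i, ∑ j, (h i j - if i = j then c i else 0) ^ 2 := by positivity
  have p2 : 0 ≤ ∑ i : Fin m, ∑ j : Fin m,
      (h i.castSucc j.castSucc - if i = j then a else 0) ^ 2 := by positivity
  have key : (((m + 1 : ℕ) + 1) / 2 : ℝ) * (∑ i, ∑ j, (h i j) ^ 2
          + ∑ i : Fin m, ∑ j : Fin m, (h i.castSucc j.castSucc) ^ 2) - (∑ i, h i i) ^ 2
      = ((m : ℝ) + 2) / 2 * (∑ i, ∑ j, (h i j - if i = j then c i else 0) ^ 2 +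
        ∑ i : Fin m, ∑ j : Fin m, (h i.castSucc j.castSucc - if i = j then a else 0) ^ 2) := by
    rw [e1, e2, ha]
    push_cast
    linear_combination 2 * a * ((m : ℝ) + 2) * hT
  refine ⟨?_, ?_, ?_⟩
  · have : 0 ≤ ((m : ℝ) + 2) / 2 * (∑ i, ∑ j, (h i j - if i = j then c i else 0) ^ 2 +
        ∑ i : Fin m, ∑ j : Fin m, (h i.castSucc j.castSucc - if i = j then a else 0) ^ 2) := by
      positivity
    linarith
  · intro heq
    rw [heq, sub_self] at key
    have z : ∑ i, ∑ j, (h i j - if i = j then c i else 0) ^ 2 = 0 := by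
      rcases mul_eq_zero.1 key.symm with h0 | h0
      · linarith
      · linarith
    have hz : ∀ i j, h i j = if i = j then c i else 0 := by
      intro i j
      rw [Finset.sum_eq_zero_iff_of_nonneg (fun i _ => by positivity)] at z
      have z1 := z i (Finset.mem_univ _)
      rw [Finset.sum_eq_zero_iff_of_nonneg (fun i _ => by positivity)] at z1
      have z2 := z1 j (Finset.mem_univ _)
      exact sub_eq_zero.1 (pow_eq_zero_iff (two_ne_zero) |>.1 z2)
    refine ⟨a, fun i j hij => by rw [hz, if_neg hij], fun i hi => by rw [hz]; simp [c, hi], ?_⟩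
    rw [hz]; simp [c]
  · rintro ⟨b, h0, h1, h2⟩
    have h1' : ∀ i : Fin m, h i.castSucc i.castSucc = b := fun i => h1 _ (by simp)
    have hab : a = b := by
      simp only [h1', h2, Finset.sum_const, Finset.card_univ, Fintype.card_fin,
        nsmul_eq_mul] at hT
      exact mul_left_cancel₀ hm.ne' (by linarith)
    have q : ∀ i j, h i j = if i = j then c i else 0 := by
      intro i j
      split_ifs with hij
      · subst hij
        induction i using Fin.lastCases with
        | last => rw [h2, hc2, hab]
        | cast i => rw [h1', hc1, hab]
      · exact h0 i j hij
    have r1 : ∑ i, ∑ j, (h i j - if i = j then c i else 0) ^ 2 = 0 :=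
      Finset.sum_eq_zero fun i _ => Finset.sum_eq_zero fun j _ => by rw [← q]; simp
    have r2 : ∑ i : Fin m, ∑ j : Fin m,
        (h i.castSucc j.castSucc - if i = j then a else 0) ^ 2 = 0 :=
      Finset.sum_eq_zero fun i _ => Finset.sum_eq_zero fun j _ => by
        rw [q]; simp [hc1]
    rw [r1, r2] at key
    linarith

/-- For `n ≥ 2` and a symmetric real `n × n` matrix `h`,
`(∑ i, h i i)² ≤ ((n+1)/2)·(∑_{i,j} h_{ij}² + ∑_{i,j ≤ n-1} h_{ij}²)`, with equality iff
`h` is diagonal with `h_{11} = ⋯ = h_{n-1,n-1} = a` and `h_{nn} = 2a` for some real `a`. -/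
theorem casorati_normalized_delta (n : ℕ) (hn : 2 ≤ n)
    (h : Matrix (Fin n) (Fin n) ℝ) (hsym : h.IsSymm) :
    (∑ i, h i i) ^ 2 ≤
      ((n + 1) / 2 : ℝ) *
        (∑ i, ∑ j, (h i j) ^ 2
          + ∑ i : Fin (n - 1), ∑ j : Fin (n - 1),
              (h (Fin.castLE (by omega) i) (Fin.castLE (by omega) j)) ^ 2)
    ∧ ((∑ i, h i i) ^ 2 =
        ((n + 1) / 2 : ℝ) *
          (∑ i, ∑ j, (h i j) ^ 2
            + ∑ i : Fin (n - 1), ∑ j : Fin (n - 1),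
                (h (Fin.castLE (by omega) i) (Fin.castLE (by omega) j)) ^ 2)
      ↔ ∃ a : ℝ,
          (∀ i j : Fin n, i ≠ j → h i j = 0) ∧
          (∀ i : Fin n, (i : ℕ) < n - 1 → h i i = a) ∧
          h ⟨n - 1, by omega⟩ ⟨n - 1, by omega⟩ = 2 * a) := by
  obtain ⟨m, rfl⟩ : ∃ m, n = m + 1 := ⟨n - 1, by omega⟩
  exact cas_core m h
end

section
/- Let n ≥ 2 be an integer. For every symmetric real n×n matrix h = (h_{ij}) one has (∑_{i=1}^n h_{ii})² ≤ ((2n−1)/2)·(2·∑_{i,j=1}^n h_{ij}² − ∑_{i,j=1}^{n−1} h_{ij}²), and equality holds if and only if there exists a real number a such that h_{ij} = 0 for all i ≠ j, h_{11} = ⋯ = h_{n−1,n−1} = 2a, and h_{nn} = a. -/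
theorem casorati_aux_s6 (m : ℕ) (h : Matrix (Fin (m+1)) (Fin (m+1)) ℝ) (hsym : h.IsSymm) :
    ∃ t : ℝ, t * ((2 * m + 1) / 2) = ∑ i, h i i ∧
    ((2 * m + 1) / 2 : ℝ) * (2 * ∑ i, ∑ j, (h i j) ^ 2
          - ∑ i : Fin m, ∑ j : Fin m, (h i.castSucc j.castSucc) ^ 2) - (∑ i, h i i) ^ 2
    = ((2 * m + 1) / 2 : ℝ) * (∑ i : Fin m, (h i.castSucc i.castSucc - t) ^ 2
      + 2 * (h (Fin.last m) (Fin.last m) - t / 2) ^ 2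
      + 4 * ∑ i : Fin m, (h i.castSucc (Fin.last m)) ^ 2
      + ∑ i : Fin m, ∑ j : Fin m, if i = j then 0 else (h i.castSucc j.castSucc) ^ 2) := by
  have hc : ((2 * m + 1) / 2 : ℝ) ≠ 0 := by positivity
  refine ⟨(∑ i, h i i) / ((2 * m + 1) / 2), by field_simp, ?_⟩
  set t := (∑ i, h i i) / ((2 * m + 1) / 2 : ℝ) with ht
  have htc : ∑ i, h i i = t * ((2 * m + 1) / 2) := by rw [ht]; field_simp
  have hoff : (∑ i : Fin m, ∑ j : Fin m, if i = j then 0 else (h i.castSucc j.castSucc) ^ 2)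
      = ∑ i : Fin m, ∑ j : Fin m, (h i.castSucc j.castSucc) ^ 2
        - ∑ i : Fin m, (h i.castSucc i.castSucc) ^ 2 := by
    rw [← Finset.sum_sub_distrib]
    refine Finset.sum_congr rfl fun i _ => ?_
    have : (h i.castSucc i.castSucc) ^ 2
        = ∑ j : Fin m, if i = j then (h i.castSucc j.castSucc) ^ 2 else 0 := by simp
    rw [this, ← Finset.sum_sub_distrib]
    refine Finset.sum_congr rfl fun j _ => ?_
    split_ifs <;> simp
  have hsq : ∑ i : Fin m, (h i.castSucc i.castSucc - t) ^ 2
      = ∑ i : Fin m, (h i.castSucc i.castSucc) ^ 2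
        - 2 * t * ∑ i : Fin m, h i.castSucc i.castSucc + m * t ^ 2 := by
    simp only [sub_sq, Finset.sum_add_distrib, Finset.sum_sub_distrib, Finset.mul_sum]
    simp
    exact Finset.sum_congr rfl fun i _ => by ring
  have hv : ∀ j : Fin m, h (Fin.last m) j.castSucc = h j.castSucc (Fin.last m) :=
    fun j => hsym.apply _ _
  rw [hoff, hsq]
  rw [htc]
  rw [Fin.sum_univ_castSucc] at htc
  have hS : ∑ i : Fin m, h i.castSucc i.castSucc
      = t * ((2 * m + 1) / 2) - h (Fin.last m) (Fin.last m) := by linarith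
  rw [hS]
  simp only [Fin.sum_univ_castSucc, hv, Finset.sum_add_distrib]
  ring

/-- For `n ≥ 2` and a symmetric real `n × n` matrix `h`,
`(∑ i, h i i)² ≤ ((2n−1)/2)·(2·∑_{i,j} h_{ij}² − ∑_{i,j ≤ n-1} h_{ij}²)`, with equality iff
`h` is diagonal with `h_{11} = ⋯ = h_{n-1,n-1} = 2a` and `h_{nn} = a` for some real `a`. -/
theorem casorati_normalized_deltahat (n : ℕ) (hn : 2 ≤ n)
    (h : Matrix (Fin n) (Fin n) ℝ) (hsym : h.IsSymm) :
    (∑ i, h i i) ^ 2 ≤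
      ((2 * n - 1) / 2 : ℝ) *
        (2 * ∑ i, ∑ j, (h i j) ^ 2
          - ∑ i : Fin (n - 1), ∑ j : Fin (n - 1),
              (h (Fin.castLE (by omega) i) (Fin.castLE (by omega) j)) ^ 2)
    ∧ ((∑ i, h i i) ^ 2 =
        ((2 * n - 1) / 2 : ℝ) *
          (2 * ∑ i, ∑ j, (h i j) ^ 2
            - ∑ i : Fin (n - 1), ∑ j : Fin (n - 1),
                (h (Fin.castLE (by omega) i) (Fin.castLE (by omega) j)) ^ 2)
      ↔ ∃ a : ℝ,
          (∀ i j : Fin n, i ≠ j → h i j = 0) ∧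
          (∀ i : Fin n, (i : ℕ) < n - 1 → h i i = 2 * a) ∧
          h ⟨n - 1, by omega⟩ ⟨n - 1, by omega⟩ = a) := by
  obtain ⟨m, rfl⟩ : ∃ m, n = m + 1 := ⟨n - 1, by omega⟩
  obtain ⟨t, htS, hQ⟩ := casorati_aux_s6 m h hsym
  have hn1 : ((2 * ((m + 1 : ℕ) : ℝ) - 1) / 2 : ℝ) = (2 * m + 1) / 2 := by push_cast; ring
  rw [hn1]
  have hcpos : (0 : ℝ) < (2 * m + 1) / 2 := by positivity
  change (∑ i, h i i) ^ 2 ≤ ((2 * m + 1) / 2 : ℝ) * (2 * ∑ i, ∑ j, (h i j) ^ 2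
          - ∑ i : Fin m, ∑ j : Fin m, (h i.castSucc j.castSucc) ^ 2) ∧
    ((∑ i, h i i) ^ 2 = ((2 * m + 1) / 2 : ℝ) * (2 * ∑ i, ∑ j, (h i j) ^ 2
          - ∑ i : Fin m, ∑ j : Fin m, (h i.castSucc j.castSucc) ^ 2) ↔ ∃ a : ℝ,
          (∀ i j : Fin (m + 1), i ≠ j → h i j = 0) ∧
          (∀ i : Fin (m + 1), (i : ℕ) < m → h i i = 2 * a) ∧
          h (Fin.last m) (Fin.last m) = a)
  have h1 : 0 ≤ ∑ i : Fin m, (h i.castSucc i.castSucc - t) ^ 2 :=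
    Finset.sum_nonneg fun i _ => sq_nonneg _
  have h2 : 0 ≤ (h (Fin.last m) (Fin.last m) - t / 2) ^ 2 := sq_nonneg _
  have h3 : 0 ≤ ∑ i : Fin m, (h i.castSucc (Fin.last m)) ^ 2 :=
    Finset.sum_nonneg fun i _ => sq_nonneg _
  have h4' : ∀ i j : Fin m, 0 ≤ if i = j then 0 else (h i.castSucc j.castSucc) ^ 2 := by
    intro i j
    split_ifs
    · exact le_rfl
    · exact sq_nonneg _
  have h4 : 0 ≤ ∑ i : Fin m, ∑ j : Fin m, if i = j then 0 else (h i.castSucc j.castSucc) ^ 2 :=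
    Finset.sum_nonneg fun i _ => Finset.sum_nonneg fun j _ => h4' i j
  constructor
  · rw [← sub_nonneg, hQ]
    positivity
  rw [eq_comm, ← sub_eq_zero, hQ, mul_eq_zero, or_iff_right hcpos.ne']
  constructor
  · intro h0
    have e1 := (Finset.sum_eq_zero_iff_of_nonneg fun i _ => sq_nonneg _).1
      (show ∑ i : Fin m, (h i.castSucc i.castSucc - t) ^ 2 = 0 by linarith)
    have e2 : (h (Fin.last m) (Fin.last m) - t / 2) ^ 2 = 0 := by linarith
    have e3 := (Finset.sum_eq_zero_iff_of_nonneg fun i _ => sq_nonneg _).1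
      (show ∑ i : Fin m, (h i.castSucc (Fin.last m)) ^ 2 = 0 by linarith)
    have e4 := (Finset.sum_eq_zero_iff_of_nonneg fun i _ =>
        Finset.sum_nonneg fun j _ => h4' i j).1
      (show (∑ i : Fin m, ∑ j : Fin m,
        if i = j then 0 else (h i.castSucc j.castSucc) ^ 2) = 0 by linarith)
    have e3' : ∀ i : Fin m, h i.castSucc (Fin.last m) = 0 := fun i => by
      simpa using e3 i (Finset.mem_univ _)
    refine ⟨t / 2, ?_, ?_, ?_⟩
    · intro i j
      induction i using Fin.lastCases with
      | last =>
        induction j using Fin.lastCases with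
        | last => intro hne; exact absurd rfl hne
        | cast j => intro _; rw [← hsym.apply]; exact e3' j
      | cast i =>
        induction j using Fin.lastCases with
        | last => intro _; exact e3' i
        | cast j =>
          intro hne
          have hij : i ≠ j := fun e => hne (by rw [e])
          have := (Finset.sum_eq_zero_iff_of_nonneg fun j _ => h4' i j).1
            (e4 i (Finset.mem_univ _)) j (Finset.mem_univ _)
          simpa [hij] using this
    · intro i
      induction i using Fin.lastCases with
      | last => intro hi; simp at hi
      | cast i =>
        intro _
        have := pow_eq_zero_iff (two_ne_zero) |>.1 (e1 i (Finset.mem_univ _))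
        linarith
    · have := pow_eq_zero_iff (two_ne_zero) |>.1 e2
      linarith
  · rintro ⟨a, ho, hd, hl⟩
    have hd' : ∀ i : Fin m, h i.castSucc i.castSucc = 2 * a := fun i => hd _ (by simp)
    have ho1 : ∀ i : Fin m, h i.castSucc (Fin.last m) = 0 :=
      fun i => ho _ _ (Fin.castSucc_lt_last i).ne
    have ht : t = 2 * a := by
      rw [Fin.sum_univ_castSucc] at htS
      simp only [hd', hl, Finset.sum_const, Finset.card_univ, Fintype.card_fin,
        nsmul_eq_mul] at htS
      apply mul_right_cancel₀ hcpos.ne'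
      rw [htS]; ring
    have h40 : (∑ i : Fin m, ∑ j : Fin m,
        if i = j then 0 else (h i.castSucc j.castSucc) ^ 2) = 0 := by
      refine Finset.sum_eq_zero fun i _ => Finset.sum_eq_zero fun j _ => ?_
      split_ifs with e
      · rfl
      · rw [ho _ _ (fun e' => e (Fin.castSucc_injective m e'))]; simp
    rw [h40]
    simp [hd', ho1, hl, ht]
end

section
/- Let V be a finite-dimensional real inner product space with dim V ≥ 1, let K be an orthogonal complex structure on V (a linear isometry with K² = −id), let e ∈ V be a unit vector, and let (e₁,…,e_n) be an orthonormal basis of the orthogonal complement of e in V, where n = dim V − 1. Then ∑_{i,j=1}^n ⟨e_i, K e_j⟩² = n − 1. -/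
open scoped RealInnerProductSpace

theorem aux_sum_sq {V : Type*} [NormedAddCommGroup V] [InnerProductSpace ℝ V]
    [FiniteDimensional ℝ V] (e : V) (he : ‖e‖ = 1) (n : ℕ)
    (b : OrthonormalBasis (Fin n) ℝ ((ℝ ∙ e)ᗮ : Submodule ℝ V)) (v : V) :
    ∑ i, ⟪(b i : V), v⟫ ^ 2 = ⟪v, v⟫ - ⟪e, v⟫ ^ 2 := by
  have hee : ⟪e, e⟫ = (1 : ℝ) := by rw [real_inner_self_eq_norm_sq, he]; norm_num
  have hw : v - ⟪e, v⟫ • e ∈ (ℝ ∙ e)ᗮ := by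
    rw [Submodule.mem_orthogonal_singleton_iff_inner_right, inner_sub_right, inner_smul_right, hee]
    ring
  have h := b.sum_sq_inner_right ⟨_, hw⟩
  rw [← real_inner_self_eq_norm_sq, Submodule.coe_inner] at h
  have h2 : ∀ i, ⟪b i, (⟨_, hw⟩ : ((ℝ ∙ e)ᗮ : Submodule ℝ V))⟫ = ⟪(b i : V), v⟫ := by
    intro i
    have h3 : ⟪(b i : V), e⟫ = 0 :=
      Submodule.mem_orthogonal_singleton_iff_inner_left.1 (b i).2
    rw [Submodule.coe_inner, inner_sub_right, inner_smul_right, h3]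
    ring
  simp only [h2] at h
  rw [h]
  simp only [inner_sub_right, inner_sub_left, inner_smul_right, inner_smul_left, hee,
    real_inner_comm v e, conj_trivial]
  try rw [real_inner_comm v e]
  ring

/-- If `K` is an orthogonal complex structure on a finite-dimensional real
inner product space `V` with `dim V ≥ 1`, `e` a unit vector and `(e₁,…,e_n)` an
orthonormal basis of the orthogonal complement of `e` (`n = dim V − 1`), then
`∑_{i,j} ⟨e_i, K e_j⟩² = n − 1`. -/
theorem sum_sq_inner_complexStructure
    (V : Type*) [NormedAddCommGroup V] [InnerProductSpace ℝ V] [FiniteDimensional ℝ V]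
    (hV : 1 ≤ Module.finrank ℝ V)
    (K : V →ₗ[ℝ] V)
    (hKiso : ∀ x y : V, ⟪K x, K y⟫ = ⟪x, y⟫)
    (hKsq : K ∘ₗ K = -LinearMap.id)
    (e : V) (he : ‖e‖ = 1)
    (n : ℕ) (hn : n = Module.finrank ℝ V - 1)
    (b : OrthonormalBasis (Fin n) ℝ ((ℝ ∙ e)ᗮ : Submodule ℝ V)) :
    ∑ i, ∑ j, ⟪(b i : V), K (b j : V)⟫ ^ 2 = (n : ℝ) - 1 := by
  have hskew : ∀ x y : V, ⟪x, K y⟫ = -⟪y, K x⟫ := by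
    intro x y
    have h : K (K y) = -y := by simpa using LinearMap.congr_fun hKsq y
    rw [← hKiso x (K y), h, inner_neg_right, real_inner_comm]
  have h0 : ⟪e, K e⟫ = 0 := by linarith [hskew e e]
  have hee : ⟪e, e⟫ = (1 : ℝ) := by rw [real_inner_self_eq_norm_sq, he]; norm_num
  have hb : ∀ j, ⟪(b j : V), (b j : V)⟫ = (1 : ℝ) := by
    intro j
    rw [← Submodule.coe_inner, real_inner_self_eq_norm_sq, b.norm_eq_one]; norm_num
  rw [Finset.sum_comm]
  simp only [aux_sum_sq e he n b, hKiso, hb]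
  simp only [hskew e, neg_sq, Finset.sum_sub_distrib]
  rw [aux_sum_sq e he n b, hKiso, hee, h0]
  simp
end

section
/- Let m ≥ 1, let V be a real inner product space of dimension 4m, let J be an orthogonal complex structure on V (a linear isometry with J² = −id), and let (J₁, J₂, J₃) be a quaternionic Hermitian triple on V (linear isometries with J_α² = −id and J₁∘J₂ = J₃ = −J₂∘J₁, J₂∘J₃ = J₁ = −J₃∘J₂, J₃∘J₁ = J₂ = −J₁∘J₃) such that J∘J_α = J_α∘J for α = 1, 2, 3. Let e ∈ V be a unit vector, set n = 4m − 1, and let (e₁,…,e_n) be an orthonormal basis of the orthogonal complement of e in V. Then 3·∑_{i,j=1}^n ⟨e_i, J e_j⟩² + ∑_{α=1}^3 [ 3·∑_{i,j=1}^n ⟨e_i, J_α e_j⟩² + (∑_{i=1}^n ⟨e_i, J_α J e_i⟩)·(∑_{j=1}^n ⟨e_j, J_α J e_j⟩) − ∑_{i,j=1}^n ⟨e_i, J_α J e_j⟩² ] = 9(n − 1). -/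
open scoped RealInnerProductSpace

theorem aux_trace {V : Type*} [NormedAddCommGroup V] [InnerProductSpace ℝ V]
    [FiniteDimensional ℝ V]
    (A K : V →ₗ[ℝ] V) (hA : A ∘ₗ A = -LinearMap.id) (h : A ∘ₗ (K ∘ₗ A) = K) :
    LinearMap.trace ℝ V K = 0 := by
  have h1 : LinearMap.trace ℝ V (A ∘ₗ (K ∘ₗ A)) = LinearMap.trace ℝ V ((K ∘ₗ A) ∘ₗ A) :=
    LinearMap.trace_comp_comm' _ _
  have h2 : (K ∘ₗ A) ∘ₗ A = -K := by
    rw [LinearMap.comp_assoc, hA]; ext x; simp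
  rw [h, h2, map_neg] at h1
  linarith

theorem aux_skew {V : Type*} [NormedAddCommGroup V] [InnerProductSpace ℝ V]
    (A : V →ₗ[ℝ] V) (hi : ∀ x y : V, ⟪A x, A y⟫ = ⟪x, y⟫) (hA : A ∘ₗ A = -LinearMap.id)
    (x y : V) : ⟪x, A y⟫ = -⟪A x, y⟫ := by
  have h : A (A y) = -y := by simpa using LinearMap.congr_fun hA y
  rw [← hi x (A y), h, inner_neg_right]

theorem aux_basis {V : Type*} [NormedAddCommGroup V] [InnerProductSpace ℝ V]
    (n : ℕ) (hd : Module.finrank ℝ V = n + 1) (e : V) (he : ‖e‖ = 1)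
    (b : OrthonormalBasis (Fin n) ℝ ((ℝ ∙ e)ᗮ : Submodule ℝ V)) :
    ∃ c : OrthonormalBasis (Option (Fin n)) ℝ V, c none = e ∧ ∀ i, c (some i) = b i := by
  have hb : ∀ i, ⟪e, (b i : V)⟫ = 0 := fun i =>
    Submodule.mem_orthogonal_singleton_iff_inner_right.1 (b i).2
  have hb' : ∀ i, ⟪(b i : V), e⟫ = 0 := fun i => by rw [real_inner_comm, hb]
  have ho : Orthonormal ℝ (fun o : Option (Fin n) => o.elim e (fun i => (b i : V))) := by
    rw [orthonormal_iff_ite]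
    have h2 := orthonormal_iff_ite.1 b.orthonormal
    rintro (_ | i) (_ | j)
    · simp [he]
    · simp [hb]
    · simp [hb']
    · simpa using h2 i j
  have : FiniteDimensional ℝ V := Module.finite_of_finrank_eq_succ hd
  have hsp := (ho.linearIndependent.span_eq_top_of_card_eq_finrank' (by simp [hd])).ge
  exact ⟨OrthonormalBasis.mk ho hsp, by simp, by simp⟩

theorem aux_sq {V : Type*} [NormedAddCommGroup V] [InnerProductSpace ℝ V]
    (n : ℕ) (hd : Module.finrank ℝ V = n + 1) (e : V) (he : ‖e‖ = 1)
    (b : OrthonormalBasis (Fin n) ℝ ((ℝ ∙ e)ᗮ : Submodule ℝ V))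
    (K : V →ₗ[ℝ] V) (hi : ∀ x y : V, ⟪K x, K y⟫ = ⟪x, y⟫)
    (hs : ∀ x y : V, ⟪x, K y⟫ ^ 2 = ⟪K x, y⟫ ^ 2) :
    ∑ i, ∑ j, ⟪(b i : V), K (b j : V)⟫ ^ 2 = (n : ℝ) - 1 + ⟪e, K e⟫ ^ 2 := by
  obtain ⟨c, hc0, hc⟩ := aux_basis n hd e he b
  have hp : ∀ x : V, ∑ i, ⟪(b i : V), x⟫ ^ 2 = ⟪x, x⟫ - ⟪e, x⟫ ^ 2 := by
    intro x
    have := c.sum_inner_mul_inner x x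
    rw [Fintype.sum_option] at this
    simp only [hc0, hc] at this
    rw [← this, real_inner_comm e x]
    have h3 : ∀ i, ⟪x, (b i : V)⟫ * ⟪(b i : V), x⟫ = ⟪(b i : V), x⟫ ^ 2 := fun i => by
      rw [real_inner_comm, sq]
    simp only [h3]
    ring
  have hbb : ∀ j, ⟪(b j : V), (b j : V)⟫ = 1 := fun j => by
    rw [← hc, real_inner_self_eq_norm_sq, c.norm_eq_one]; norm_num
  have hee : ⟪e, e⟫ = 1 := by rw [real_inner_self_eq_norm_sq, he]; norm_num
  rw [Finset.sum_comm]
  simp only [hp, hi, hbb]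
  rw [Finset.sum_sub_distrib]
  have h4 : ∀ j, ⟪e, K (b j : V)⟫ ^ 2 = ⟪(b j : V), K e⟫ ^ 2 := fun j => by
    rw [hs, real_inner_comm]
  simp only [h4, hp, hi, hee]
  simp
  ring

theorem aux_tr {V : Type*} [NormedAddCommGroup V] [InnerProductSpace ℝ V]
    (n : ℕ) (hd : Module.finrank ℝ V = n + 1) (e : V) (he : ‖e‖ = 1)
    (b : OrthonormalBasis (Fin n) ℝ ((ℝ ∙ e)ᗮ : Submodule ℝ V))
    (K : V →ₗ[ℝ] V) (ht : LinearMap.trace ℝ V K = 0) :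
    ∑ i, ⟪(b i : V), K (b i : V)⟫ = -⟪e, K e⟫ := by
  obtain ⟨c, hc0, hc⟩ := aux_basis n hd e he b
  have := K.trace_eq_sum_inner c
  rw [Fintype.sum_option, ht] at this
  simp only [hc0, hc] at this
  linarith

theorem aux_term {V : Type*} [NormedAddCommGroup V] [InnerProductSpace ℝ V]
    (n : ℕ) (hd : Module.finrank ℝ V = n + 1) (e : V) (he : ‖e‖ = 1)
    (b : OrthonormalBasis (Fin n) ℝ ((ℝ ∙ e)ᗮ : Submodule ℝ V))
    (J A B : V →ₗ[ℝ] V) (hJi : ∀ x y : V, ⟪J x, J y⟫ = ⟪x, y⟫)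
    (hJ : J ∘ₗ J = -LinearMap.id)
    (hAi : ∀ x y : V, ⟪A x, A y⟫ = ⟪x, y⟫) (hA : A ∘ₗ A = -LinearMap.id)
    (hB : B ∘ₗ B = -LinearMap.id) (hBAB : B ∘ₗ (A ∘ₗ B) = A)
    (hcA : J ∘ₗ A = A ∘ₗ J) (hcB : J ∘ₗ B = B ∘ₗ J) :
    3 * (∑ i, ∑ j, ⟪(b i : V), A (b j : V)⟫ ^ 2)
            + (∑ i, ⟪(b i : V), A (J (b i : V))⟫)
                * (∑ j, ⟪(b j : V), A (J (b j : V))⟫)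
            - ∑ i, ∑ j, ⟪(b i : V), A (J (b j : V))⟫ ^ 2 = 2 * ((n : ℝ) - 1) := by
  have : FiniteDimensional ℝ V := Module.finite_of_finrank_eq_succ hd
  have hsA := aux_skew A hAi hA
  have hsJ := aux_skew J hJi hJ
  have hc : ∀ x, J (A x) = A (J x) := fun x => LinearMap.congr_fun hcA x
  have h1 := aux_sq n hd e he b A hAi (fun x y => by rw [hsA]; ring)
  have h0 : ⟪e, A e⟫ = 0 := by
    have := hsA e e
    rw [real_inner_comm] at this
    have h5 := real_inner_comm e (A e)
    linarith
  have h2 := aux_sq n hd e he b (A ∘ₗ J) (fun x y => by simp [hAi, hJi])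
    (fun x y => by simp [hsA, hsJ, hc])
  have h3 := aux_tr n hd e he b (A ∘ₗ J) (aux_trace B _ hB (by
    ext x
    have h6 : J (B x) = B (J x) := LinearMap.congr_fun hcB x
    have h7 : B (A (B (J x))) = A (J x) := LinearMap.congr_fun hBAB (J x)
    simp [h6, h7]))
  simp only [LinearMap.comp_apply] at h2 h3
  rw [h1, h2, h3, h0]
  ring

/-- With `dim V = 4m` (`m ≥ 1`), `J` an orthogonal complex structure and
`(J₁, J₂, J₃)` a quaternionic Hermitian triple on `V` commuting with `J`, `e` a unit
vector, `n = 4m − 1` and `(e₁,…,e_n)` an orthonormal basis of the orthogonal complement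
of `e`, the full contraction of the curvature correction terms equals `9(n − 1)`:
`3 ∑_{i,j} ⟨e_i, J e_j⟩² + ∑_{α=1}^{3} [ 3 ∑_{i,j} ⟨e_i, J_α e_j⟩²
  + (∑_i ⟨e_i, J_α J e_i⟩)(∑_j ⟨e_j, J_α J e_j⟩) − ∑_{i,j} ⟨e_i, J_α J e_j⟩² ] = 9(n−1)`. -/
theorem curvature_contraction_eq
    (m : ℕ) (hm : 1 ≤ m)
    (V : Type*) [NormedAddCommGroup V] [InnerProductSpace ℝ V]
    (hdim : Module.finrank ℝ V = 4 * m)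
    (J J₁ J₂ J₃ : V →ₗ[ℝ] V)
    (hJiso : ∀ x y : V, ⟪J x, J y⟫ = ⟪x, y⟫)
    (hJsq : J ∘ₗ J = -LinearMap.id)
    (hJ₁iso : ∀ x y : V, ⟪J₁ x, J₁ y⟫ = ⟪x, y⟫)
    (hJ₂iso : ∀ x y : V, ⟪J₂ x, J₂ y⟫ = ⟪x, y⟫)
    (hJ₃iso : ∀ x y : V, ⟪J₃ x, J₃ y⟫ = ⟪x, y⟫)
    (hJ₁sq : J₁ ∘ₗ J₁ = -LinearMap.id)
    (hJ₂sq : J₂ ∘ₗ J₂ = -LinearMap.id)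
    (hJ₃sq : J₃ ∘ₗ J₃ = -LinearMap.id)
    (h12 : J₁ ∘ₗ J₂ = J₃) (h21 : J₂ ∘ₗ J₁ = -J₃)
    (h23 : J₂ ∘ₗ J₃ = J₁) (h32 : J₃ ∘ₗ J₂ = -J₁)
    (h31 : J₃ ∘ₗ J₁ = J₂) (h13 : J₁ ∘ₗ J₃ = -J₂)
    (hc1 : J ∘ₗ J₁ = J₁ ∘ₗ J)
    (hc2 : J ∘ₗ J₂ = J₂ ∘ₗ J)
    (hc3 : J ∘ₗ J₃ = J₃ ∘ₗ J)
    (e : V) (he : ‖e‖ = 1)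
    (n : ℕ) (hn : n = 4 * m - 1)
    (b : OrthonormalBasis (Fin n) ℝ ((ℝ ∙ e)ᗮ : Submodule ℝ V)) :
    3 * (∑ i, ∑ j, ⟪(b i : V), J (b j : V)⟫ ^ 2)
      + ∑ α : Fin 3,
          (3 * (∑ i, ∑ j, ⟪(b i : V), (![J₁, J₂, J₃] α) (b j : V)⟫ ^ 2)
            + (∑ i, ⟪(b i : V), (![J₁, J₂, J₃] α) (J (b i : V))⟫)
                * (∑ j, ⟪(b j : V), (![J₁, J₂, J₃] α) (J (b j : V))⟫)
            - ∑ i, ∑ j, ⟪(b i : V), (![J₁, J₂, J₃] α) (J (b j : V))⟫ ^ 2)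
      = 9 * ((n : ℝ) - 1) := by
  have hd : Module.finrank ℝ V = n + 1 := by omega
  have hsJ := aux_skew J hJiso hJsq
  have h1 := aux_sq n hd e he b J hJiso (fun x y => by rw [hsJ]; ring)
  have h0 : ⟪e, J e⟫ = 0 := by
    have := hsJ e e
    have h5 := real_inner_comm e (J e)
    linarith
  have t1 := aux_term n hd e he b J J₁ J₂ hJiso hJsq hJ₁iso hJ₁sq hJ₂sq (by rw [h12, h23]) hc1 hc2
  have t2 := aux_term n hd e he b J J₂ J₃ hJiso hJsq hJ₂iso hJ₂sq hJ₃sq (by rw [h23, h31]) hc2 hc3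
  have t3 := aux_term n hd e he b J J₃ J₁ hJiso hJsq hJ₃iso hJ₃sq hJ₁sq (by rw [h31, h12]) hc3 hc1
  rw [Fin.sum_univ_three]
  simp only [Matrix.cons_val]
  rw [t1, t2, t3, h1, h0]
  ring
end
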